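/- Let D = (V, E; c; s, t) be a flow network in which every arc belongs to at least one s-t path, and suppose that: (i) the directed graph (V, E) is acyclic; (ii) each bottleneck arc b ∈ B belongs to a unique s-t path; and (iii) each non-bottleneck arc e ∉ B satisfies c(e) ≥ Σ_{P ∈ 𝒫_e} c(P). Then for every coalition S ⊆ E, the function f : E → ℝ defined by f(a) = Σ_{P ∈ 𝒫 : P ⊆ S, a ∈ P} c(P) is a feasible flow on S whose value equals Σ_{P ∈ 𝒫 : P ⊆ S} c(P). -/

import Mathlib

open scoped Classical
open Finset

noncomputable section

/-- The arcs (consecutive vertex pairs) of a vertex list. -/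
def arcsOf {V : Type*} [DecidableEq V] (vs : List V) : Finset (V × V) :=
  (vs.zip vs.tail).toFinset

/-- `vs` is the vertex list of a directed path from `a` to `b` using arcs of `E`,
with pairwise distinct vertices. -/
def IsPathList {V : Type*} (E : Finset (V × V)) (a b : V) (vs : List V) : Prop :=
  vs.Nodup ∧ vs.head? = some a ∧ vs.getLast? = some b ∧
    vs.Chain' (fun x y => (x, y) ∈ E)

/-- `P` is (the arc set of) an `s`-`t` path in the network with arc set `E`. -/
def IsSTPath {V : Type*} [DecidableEq V] (E : Finset (V × V)) (s t : V)
    (P : Finset (V × V)) : Prop :=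
  ∃ vs : List V, IsPathList E s t vs ∧ P = arcsOf vs

/-- The capacity of a path (arc set): the minimum capacity of its arcs. -/
def pathCap {V : Type*} (c : V × V → ℝ) (P : Finset (V × V)) : ℝ :=
  sInf (c '' (P : Set (V × V)))

/-- `e` is a bottleneck arc of some `s`-`t` path, i.e. `e ∈ B`. -/
def IsBottleneck {V : Type*} [DecidableEq V] (E : Finset (V × V)) (c : V × V → ℝ)
    (s t : V) (e : V × V) : Prop :=
  ∃ P : Finset (V × V), IsSTPath E s t P ∧ e ∈ P ∧ c e = pathCap c P

/-- The finite set `𝒫` of all `s`-`t` paths (as arc sets). -/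
def stPaths {V : Type*} [DecidableEq V] (E : Finset (V × V)) (s t : V) :
    Finset (Finset (V × V)) :=
  E.powerset.filter (fun P => IsSTPath E s t P)

/-- The value of a flow `f`: net flow out of the source `s`. -/
def flowValue {V : Type*} [DecidableEq V] (E : Finset (V × V)) (s : V)
    (f : V × V → ℝ) : ℝ :=
  ∑ e ∈ E.filter (fun e => e.1 = s), f e - ∑ e ∈ E.filter (fun e => e.2 = s), f e

/-- `f` is a feasible flow on the coalition `S`. -/
def IsFeasibleFlow {V : Type*} [DecidableEq V] (E : Finset (V × V)) (c : V × V → ℝ)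
    (s t : V) (S : Finset (V × V)) (f : V × V → ℝ) : Prop :=
  (∀ e ∈ E, 0 ≤ f e ∧ f e ≤ c e) ∧
  (∀ e, e ∉ S → f e = 0) ∧
  (∀ v, v ≠ s → v ≠ t →
    ∑ e ∈ E.filter (fun e => e.2 = v), f e = ∑ e ∈ E.filter (fun e => e.1 = v), f e)

/-- `γ` is the characteristic function of the flow game on `D = (V,E;c;s,t)`:
for each coalition `S ⊆ E`, `γ S` is the maximum value of a feasible flow on `S`. -/
def IsFlowGame {V : Type*} [DecidableEq V] (E : Finset (V × V)) (c : V × V → ℝ)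
    (s t : V) (γ : Finset (V × V) → ℝ) : Prop :=
  ∀ S : Finset (V × V), S ⊆ E →
    IsGreatest {x : ℝ | ∃ f, IsFeasibleFlow E c s t S f ∧ flowValue E s f = x} (γ S)

/-- The cooperative game `γ` with player set `E` is convex (supermodular). -/
def GameConvex {V : Type*} [DecidableEq V] (E : Finset (V × V))
    (γ : Finset (V × V) → ℝ) : Prop :=
  ∀ e ∈ E, ∀ S T : Finset (V × V), S ⊆ T → T ⊆ E.erase e →
    γ (insert e S) - γ S ≤ γ (insert e T) - γ T

/-- The directed graph with arc set `E` contains a directed cycle. -/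
def HasDirectedCycle {V : Type*} (E : Finset (V × V)) : Prop :=
  ∃ (v : V) (vs : List V), (v :: vs).Nodup ∧
    (v :: vs).Chain' (fun x y => (x, y) ∈ E) ∧
    ((v :: vs).getLast (List.cons_ne_nil v vs), v) ∈ E

/-!
Every vertex `v` is left and entered equally often by an `s`-`t` path, up to one extra departure at
`s` and one extra arrival at `t`. Superposing paths with arbitrary weights therefore conserves flow
away from `s` and `t`, and the net outflow at `s` is the total weight. With the path capacities as
weights, the arc capacities are respected: a bottleneck arc carries the capacity of its only path,
which its own capacity bounds, and at every other arc the bound is assumed.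
-/

section PathArcs

variable {V : Type*} [DecidableEq V]

theorem arcsOf_cons_cons (a b : V) (l : List V) :
    arcsOf (a :: b :: l) = insert (a, b) (arcsOf (b :: l)) := by
  simp [arcsOf]

theorem fst_mem_of_mem_arcsOf {vs : List V} {e : V × V} (he : e ∈ arcsOf vs) : e.1 ∈ vs :=
  (List.of_mem_zip (a := e.1) (List.mem_toFinset.mp he)).1

theorem arcsOf_subset_of_isChain {E : Finset (V × V)} {vs : List V}
    (hchain : vs.IsChain fun x y ↦ (x, y) ∈ E) : arcsOf vs ⊆ E := by
  induction hchain with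
  | nil => simp [arcsOf]
  | singleton => simp [arcsOf]
  | cons_cons hab _ ih => simpa only [arcsOf_cons_cons] using insert_subset hab ih

theorem card_arcsOf_fst_add_eq_card_arcsOf_snd_add {vs : List V} {a b : V} (hnodup : vs.Nodup)
    (hhead : vs.head? = some a) (hlast : vs.getLast? = some b) (v : V) :
    #{e ∈ arcsOf vs | e.1 = v} + (if b = v then 1 else 0) =
      #{e ∈ arcsOf vs | e.2 = v} + (if a = v then 1 else 0) := by
  induction vs generalizing a with
  | nil => cases hhead
  | cons x l ih =>
    obtain rfl : x = a := Option.some.inj hhead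
    cases l with
    | nil =>
      obtain rfl : x = b := Option.some.inj hlast
      simp [arcsOf]
    | cons y l =>
      obtain ⟨hx, hnodup⟩ := List.nodup_cons.mp hnodup
      have hxy : (x, y) ∉ arcsOf (y :: l) := fun h ↦ hx (fst_mem_of_mem_arcsOf h)
      have htail := ih hnodup rfl (by rwa [List.getLast?_cons_cons] at hlast)
      simp only [card_filter] at htail ⊢
      rw [arcsOf_cons_cons, sum_insert hxy, sum_insert hxy]
      lia

variable {E P : Finset (V × V)} {s t : V}

theorem IsSTPath.subset (hP : IsSTPath E s t P) : P ⊆ E := by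
  obtain ⟨vs, ⟨-, -, -, hchain⟩, rfl⟩ := hP
  exact arcsOf_subset_of_isChain hchain

theorem IsSTPath.card_fst_add_eq_card_snd_add (hP : IsSTPath E s t P) (v : V) :
    #{e ∈ P | e.1 = v} + (if t = v then 1 else 0) =
      #{e ∈ P | e.2 = v} + (if s = v then 1 else 0) := by
  obtain ⟨vs, ⟨hnodup, hhead, hlast, -⟩, rfl⟩ := hP
  exact card_arcsOf_fst_add_eq_card_arcsOf_snd_add hnodup hhead hlast v

theorem mem_stPaths : P ∈ stPaths E s t ↔ IsSTPath E s t P := by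
  simpa [stPaths] using IsSTPath.subset

end PathArcs

section PathCap

variable {V : Type*} {c : V × V → ℝ} {P : Finset (V × V)}

theorem pathCap_nonneg (hc : ∀ e ∈ P, 0 ≤ c e) : 0 ≤ pathCap c P :=
  Real.sInf_nonneg (Set.forall_mem_image.mpr hc)

theorem pathCap_le {e : V × V} (he : e ∈ P) : pathCap c P ≤ c e :=
  csInf_le (P.finite_toSet.image c).bddBelow (Set.mem_image_of_mem c he)

end PathCap

/-- The superposition of a family `𝒬` of paths, given by their arc sets, in which each `P ∈ 𝒬`
carries `w P` units along all of its arcs. It is defined for arbitrary finite sets in place of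
paths. -/
def pathFlow {α M : Type*} [DecidableEq α] [AddCommMonoid M] (𝒬 : Finset (Finset α))
    (w : Finset α → M) : α → M :=
  fun a ↦ ∑ P ∈ 𝒬 with a ∈ P, w P

namespace pathFlow

section Superposition

variable {α M : Type*} [DecidableEq α] [AddCommMonoid M] {𝒬 ℛ : Finset (Finset α)}
  {w : Finset α → M}

theorem filter_eq (p : Finset α → Prop) [DecidablePred p] :
    pathFlow {P ∈ 𝒬 | p P} w = fun a ↦ ∑ P ∈ 𝒬 with p P ∧ a ∈ P, w P := by
  funext a
  rw [pathFlow, filter_filter]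

theorem eq_zero_of_notMem {S : Finset α} (hS : ∀ P ∈ 𝒬, P ⊆ S) {a : α} (ha : a ∉ S) :
    pathFlow 𝒬 w a = 0 := by
  rw [pathFlow, filter_false_of_mem fun P hP haP ↦ ha (hS P hP haP), sum_empty]

theorem sum_filter_eq_sum_card_nsmul {A : Finset α} (hA : ∀ P ∈ 𝒬, P ⊆ A) (p : α → Prop)
    [DecidablePred p] :
    ∑ a ∈ A with p a, pathFlow 𝒬 w a = ∑ P ∈ 𝒬, #{a ∈ P | p a} • w P := by
  calc ∑ a ∈ A with p a, pathFlow 𝒬 w a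
      = ∑ P ∈ 𝒬, ∑ a ∈ P with p a, w P := by
        refine sum_comm' fun a P ↦ ?_
        simp only [mem_filter]
        exact ⟨fun ⟨⟨_, hp⟩, hP, ha⟩ ↦ ⟨⟨ha, hp⟩, hP⟩,
          fun ⟨⟨ha, hp⟩, hP⟩ ↦ ⟨⟨hA P hP ha, hp⟩, hP, ha⟩⟩
    _ = ∑ P ∈ 𝒬, #{a ∈ P | p a} • w P := by simp only [sum_const]

variable [PartialOrder M] [IsOrderedAddMonoid M]

theorem nonneg (hw : ∀ P ∈ 𝒬, 0 ≤ w P) (a : α) : 0 ≤ pathFlow 𝒬 w a :=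
  sum_nonneg fun P hP ↦ hw P (mem_of_mem_filter P hP)

theorem le_of_subset (h𝒬ℛ : 𝒬 ⊆ ℛ) (hw : ∀ P ∈ ℛ, 0 ≤ w P) (a : α) :
    pathFlow 𝒬 w a ≤ pathFlow ℛ w a :=
  sum_le_sum_of_subset_of_nonneg (filter_subset_filter _ h𝒬ℛ)
    fun P hP _ ↦ hw P (mem_of_mem_filter P hP)

end Superposition

section STPaths

variable {V : Type*} [DecidableEq V] {E : Finset (V × V)} {s t : V}
  {𝒬 : Finset (Finset (V × V))}

theorem sum_out_add_eq_sum_in_add {M : Type*} [AddCommMonoid M]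
    (h𝒬 : ∀ P ∈ 𝒬, IsSTPath E s t P) (w : Finset (V × V) → M) (v : V) :
    ∑ e ∈ E with e.1 = v, pathFlow 𝒬 w e + (if t = v then ∑ P ∈ 𝒬, w P else 0) =
      ∑ e ∈ E with e.2 = v, pathFlow 𝒬 w e + (if s = v then ∑ P ∈ 𝒬, w P else 0) := by
  have hE : ∀ P ∈ 𝒬, P ⊆ E := fun P hP ↦ (h𝒬 P hP).subset
  have total_eq (u : V) : (if u = v then ∑ P ∈ 𝒬, w P else 0) =
      ∑ P ∈ 𝒬, (if u = v then 1 else 0) • w P := by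
    split_ifs <;> simp
  simp only [sum_filter_eq_sum_card_nsmul hE, total_eq, ← sum_add_distrib, ← add_nsmul]
  exact sum_congr rfl fun P hP ↦ by rw [(h𝒬 P hP).card_fst_add_eq_card_snd_add v]

theorem sum_in_eq_sum_out {M : Type*} [AddCommMonoid M] (h𝒬 : ∀ P ∈ 𝒬, IsSTPath E s t P)
    (w : Finset (V × V) → M) {v : V} (hvs : v ≠ s) (hvt : v ≠ t) :
    ∑ e ∈ E with e.2 = v, pathFlow 𝒬 w e = ∑ e ∈ E with e.1 = v, pathFlow 𝒬 w e := by
  simpa [hvs.symm, hvt.symm] using (sum_out_add_eq_sum_in_add h𝒬 w v).symm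

theorem flowValue_eq_sum (hst : s ≠ t) (h𝒬 : ∀ P ∈ 𝒬, IsSTPath E s t P)
    (w : Finset (V × V) → ℝ) : flowValue E s (pathFlow 𝒬 w) = ∑ P ∈ 𝒬, w P := by
  rw [flowValue, sub_eq_iff_eq_add']
  simpa [hst.symm] using sum_out_add_eq_sum_in_add h𝒬 w s

theorem le_capacity_of_existsUnique {c : V × V → ℝ} {e : V × V}
    (he : ∃! P, IsSTPath E s t P ∧ e ∈ P) : pathFlow (stPaths E s t) (pathCap c) e ≤ c e := by
  obtain ⟨P, ⟨hP, heP⟩, hunique⟩ := he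
  have paths_through_e : {Q ∈ stPaths E s t | e ∈ Q} = {P} := by
    ext Q
    simp only [mem_filter, mem_stPaths, mem_singleton]
    exact ⟨hunique Q, fun hQ ↦ hQ ▸ ⟨hP, heP⟩⟩
  rw [pathFlow, paths_through_e, sum_singleton]
  exact pathCap_le heP

end STPaths

end pathFlow

theorem path_flow_feasible_general {V : Type*} [DecidableEq V] (E : Finset (V × V))
    (c : V × V → ℝ) (s t : V) (hst : s ≠ t) (hc : ∀ e ∈ E, 0 ≤ c e)
    (huniq : ∀ b, IsBottleneck E c s t b → ∃! P, IsSTPath E s t P ∧ b ∈ P)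
    (hsuff : ∀ e ∈ E, ¬ IsBottleneck E c s t e →
      pathFlow (stPaths E s t) (pathCap c) e ≤ c e)
    (S : Finset (V × V)) :
    IsFeasibleFlow E c s t S (pathFlow {P ∈ stPaths E s t | P ⊆ S} (pathCap c)) ∧
      flowValue E s (pathFlow {P ∈ stPaths E s t | P ⊆ S} (pathCap c)) =
        ∑ P ∈ stPaths E s t with P ⊆ S, pathCap c P := by
  have hpath : ∀ P ∈ {P ∈ stPaths E s t | P ⊆ S}, IsSTPath E s t P :=
    fun P hP ↦ mem_stPaths.mp (mem_of_mem_filter P hP)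
  have hcap : ∀ P ∈ stPaths E s t, 0 ≤ pathCap c P :=
    fun P hP ↦ pathCap_nonneg fun e he ↦ hc e ((mem_stPaths.mp hP).subset he)
  have hle : ∀ e ∈ E, pathFlow (stPaths E s t) (pathCap c) e ≤ c e := fun e he ↦ by
    by_cases hb : IsBottleneck E c s t e
    · exact pathFlow.le_capacity_of_existsUnique (huniq e hb)
    · exact hsuff e he hb
  refine ⟨⟨fun e he ↦ ⟨?_, ?_⟩, fun e he ↦ ?_, fun v hvs hvt ↦ ?_⟩, ?_⟩
  · exact pathFlow.nonneg (fun P hP ↦ hcap P (mem_of_mem_filter P hP)) e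
  · exact (pathFlow.le_of_subset (filter_subset _ _) hcap e).trans (hle e he)
  · exact pathFlow.eq_zero_of_notMem (fun P hP ↦ (mem_filter.mp hP).2) he
  · exact pathFlow.sum_in_eq_sum_out hpath (pathCap c) hvs hvt
  · exact pathFlow.flowValue_eq_sum hst hpath (pathCap c)

/-- Under acyclicity, bottleneck exclusivity, and non-bottleneck
sufficiency, for every coalition `S ⊆ E` the function routing `c(P)` units along every
`s`-`t` path `P ⊆ S` is a feasible flow on `S` of value `Σ_{P ∈ 𝒫 : P ⊆ S} c(P)`. -/
theorem path_flow_feasible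
    {V : Type*} [Fintype V] [DecidableEq V]
    (E : Finset (V × V)) (c : V × V → ℝ) (s t : V) (γ : Finset (V × V) → ℝ)
    (hst : s ≠ t) (hc : ∀ e ∈ E, 0 < c e)
    (hγ : IsFlowGame E c s t γ)
    (hcover : ∀ e ∈ E, ∃ P : Finset (V × V), IsSTPath E s t P ∧ e ∈ P)
    (hacyc : ¬ HasDirectedCycle E)
    (huniq : ∀ b : V × V, IsBottleneck E c s t b →
      ∃! P : Finset (V × V), IsSTPath E s t P ∧ b ∈ P)
    (hsuff : ∀ e ∈ E, ¬ IsBottleneck E c s t e →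
      ∑ P ∈ (stPaths E s t).filter (fun P => e ∈ P), pathCap c P ≤ c e) :
    ∀ S : Finset (V × V), S ⊆ E →
      IsFeasibleFlow E c s t S
        (fun a => ∑ P ∈ (stPaths E s t).filter (fun P => P ⊆ S ∧ a ∈ P), pathCap c P) ∧
      flowValue E s
        (fun a => ∑ P ∈ (stPaths E s t).filter (fun P => P ⊆ S ∧ a ∈ P), pathCap c P)
        = ∑ P ∈ (stPaths E s t).filter (fun P => P ⊆ S), pathCap c P := by
  intro S _
  simpa only [pathFlow.filter_eq] using
    path_flow_feasible_general E c s t hst (fun e he ↦ (hc e he).le) huniq hsuff S
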